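/- arXiv:1802.07075 — 3 statements merged into one kernel-verified Lean document; each statement's English description precedes it below -/
import Mathlib

section
/- Let F and G be polynomials in ℚ[t_{α,0}, t_{α,1} : 0 ≤ α ≤ r−1] satisfying the topological recursion relation: for all 0 ≤ α, β ≤ r−1, ∂_{α,1}∂_{β,0}G = Σ_{μ=0}^{r−2} (∂_{α,0}∂_{μ,0}F)·(∂_{r−2−μ,0}∂_{β,0}G) + (∂_{α,0}G)·(∂_{r−1,0}∂_{β,0}G). Then F and G satisfy the WDVV-type equations: for all 0 ≤ α, β, γ ≤ r−1, Σ_{μ=0}^{r−2} (∂_{α,0}∂_{β,0}∂_{μ,0}F)·(∂_{r−2−μ,0}∂_{γ,0}G) + (∂_{α,0}∂_{β,0}G)·(∂_{r−1,0}∂_{γ,0}G) = Σ_{μ=0}^{r−2} (∂_{α,0}∂_{γ,0}∂_{μ,0}F)·(∂_{r−2−μ,0}∂_{β,0}G) + (∂_{α,0}∂_{γ,0}G)·(∂_{r−1,0}∂_{β,0}G). -/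
open scoped BigOperators
open MvPolynomial

theorem pderiv_swap {σ : Type*} (i j : σ) (p : MvPolynomial σ ℚ) :
    pderiv i (pderiv j p) = pderiv j (pderiv i p) := by
  classical
  have h : ⁅(pderiv i : Derivation ℚ (MvPolynomial σ ℚ) (MvPolynomial σ ℚ)),
      (pderiv j : Derivation ℚ (MvPolynomial σ ℚ) (MvPolynomial σ ℚ))⁆ = 0 := by
    apply MvPolynomial.derivation_ext
    intro k
    rw [Derivation.commutator_apply]
    simp only [pderiv_X, Pi.single_apply]
    split_ifs <;> simp
  have h2 := congrArg (fun D => D p) h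
  simp only [Derivation.commutator_apply] at h2
  exact sub_eq_zero.mp h2

/-- If `F` and `G` (polynomials in the variables `t_{α,d}`, `0 ≤ α ≤ r−1`,
`d ∈ {0,1}`) satisfy the topological recursion relation
`∂_{α,1}∂_{β,0}G = ∑_{μ+ν=r−2} (∂_{α,0}∂_{μ,0}F)·(∂_{ν,0}∂_{β,0}G)
  + (∂_{α,0}G)·(∂_{r−1,0}∂_{β,0}G)`,
then they satisfy the WDVV-type equations. -/
theorem wdvv_type_of_trr
    (r : ℕ) (hr : 2 ≤ r)
    (F G : MvPolynomial (Fin r × Fin 2) ℚ)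
    (hTRR : ∀ α β : Fin r,
      pderiv (α, (1 : Fin 2)) (pderiv (β, (0 : Fin 2)) G) =
        (∑ μ : Fin r, ∑ ν : Fin r,
          if (μ : ℕ) + (ν : ℕ) = r - 2 then
            pderiv (α, (0 : Fin 2)) (pderiv (μ, (0 : Fin 2)) F) *
              pderiv (ν, (0 : Fin 2)) (pderiv (β, (0 : Fin 2)) G)
          else 0)
        + pderiv (α, (0 : Fin 2)) G *
            pderiv ((⟨r - 1, by omega⟩ : Fin r), (0 : Fin 2))
              (pderiv (β, (0 : Fin 2)) G)) :
    ∀ α β γ : Fin r,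
      (∑ μ : Fin r, ∑ ν : Fin r,
        if (μ : ℕ) + (ν : ℕ) = r - 2 then
          pderiv (α, (0 : Fin 2)) (pderiv (β, (0 : Fin 2)) (pderiv (μ, (0 : Fin 2)) F)) *
            pderiv (ν, (0 : Fin 2)) (pderiv (γ, (0 : Fin 2)) G)
        else 0)
      + pderiv (α, (0 : Fin 2)) (pderiv (β, (0 : Fin 2)) G) *
          pderiv ((⟨r - 1, by omega⟩ : Fin r), (0 : Fin 2)) (pderiv (γ, (0 : Fin 2)) G)
      =
      (∑ μ : Fin r, ∑ ν : Fin r,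
        if (μ : ℕ) + (ν : ℕ) = r - 2 then
          pderiv (α, (0 : Fin 2)) (pderiv (γ, (0 : Fin 2)) (pderiv (μ, (0 : Fin 2)) F)) *
            pderiv (ν, (0 : Fin 2)) (pderiv (β, (0 : Fin 2)) G)
        else 0)
      + pderiv (α, (0 : Fin 2)) (pderiv (γ, (0 : Fin 2)) G) *
          pderiv ((⟨r - 1, by omega⟩ : Fin r), (0 : Fin 2)) (pderiv (β, (0 : Fin 2)) G) := by
  intro α β γ
  have key : ∀ b c : Fin r,
      pderiv (c, (0 : Fin 2)) (pderiv (α, (1 : Fin 2)) (pderiv (b, (0 : Fin 2)) G)) =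
      ((∑ μ : Fin r, ∑ ν : Fin r,
        if (μ : ℕ) + (ν : ℕ) = r - 2 then
          pderiv (α, (0 : Fin 2)) (pderiv (c, (0 : Fin 2)) (pderiv (μ, (0 : Fin 2)) F)) *
            pderiv (ν, (0 : Fin 2)) (pderiv (b, (0 : Fin 2)) G)
        else 0)
      + pderiv (α, (0 : Fin 2)) (pderiv (c, (0 : Fin 2)) G) *
          pderiv ((⟨r - 1, by omega⟩ : Fin r), (0 : Fin 2)) (pderiv (b, (0 : Fin 2)) G))
      + ((∑ μ : Fin r, ∑ ν : Fin r,
        if (μ : ℕ) + (ν : ℕ) = r - 2 then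
          pderiv (α, (0 : Fin 2)) (pderiv (μ, (0 : Fin 2)) F) *
            pderiv (ν, (0 : Fin 2)) (pderiv (c, (0 : Fin 2)) (pderiv (b, (0 : Fin 2)) G))
        else 0)
      + pderiv (α, (0 : Fin 2)) G *
          pderiv ((⟨r - 1, by omega⟩ : Fin r), (0 : Fin 2))
            (pderiv (c, (0 : Fin 2)) (pderiv (b, (0 : Fin 2)) G))) := by
    intro b c
    rw [hTRR α b, map_add, map_sum, add_add_add_comm]
    congr 1
    · simp only [map_sum, ← Finset.sum_add_distrib]
      refine Finset.sum_congr rfl fun μ _ => Finset.sum_congr rfl fun ν _ => ?_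
      split_ifs
      · rw [Derivation.leibniz, smul_eq_mul, smul_eq_mul,
          pderiv_swap (c, 0) (α, 0), pderiv_swap (c, 0) (ν, 0)]
        ring
      · simp
    · rw [Derivation.leibniz, smul_eq_mul, smul_eq_mul,
        pderiv_swap (c, 0) (α, 0), pderiv_swap (c, 0) (_, 0)]
      ring
  have h1 := key γ β
  have h2 := key β γ
  rw [pderiv_swap (β, 0) (α, 1), pderiv_swap (β, 0) (γ, 0), ← pderiv_swap (γ, 0) (α, 1)
    ] at h1
  exact add_right_cancel (h1.symm.trans h2)
end

section
/- The polynomial F_{3,3} satisfies the WDVV equations; moreover ∂³F_{3,3}/∂t_{00}∂t_a∂t_b = η_{a,b} for all a, b ∈ V, and every monomial t_{00}^a t_{10}^b t_{01}^c t_{11}^d occurring in F_{3,3} satisfies 3a + 2b + 2c + d = 7. -/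
open scoped BigOperators
open MvPolynomial

/-- The index set `V = {(0,0),(1,0),(0,1),(1,1)}` of the variables `t_{αβ}`. -/
abbrev Vidx : Type := Fin 2 × Fin 2

/-- The metric `η` of the FJRW theory of `x₁³+x₂³`:
`η_{(a₁,b₁),(a₂,b₂)} = 1` if `a₁+a₂ = 1` and `b₁+b₂ = 1`, and `0` otherwise. -/
def eta (v w : Vidx) : ℚ :=
  if v.1.val + w.1.val = 1 ∧ v.2.val + w.2.val = 1 then 1 else 0

/-- Third partial derivative of a polynomial in the variables `t_v`, `v ∈ V`. -/
noncomputable def d3 (F : MvPolynomial Vidx ℚ) (a b c : Vidx) : MvPolynomial Vidx ℚ :=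
  pderiv a (pderiv b (pderiv c F))

/-- The WDVV equations for a polynomial in the variables `t_v`, `v ∈ V`, with respect to the
metric `η` (which is its own inverse matrix). -/
def SatisfiesWDVV (F : MvPolynomial Vidx ℚ) : Prop :=
  ∀ v₁ v₂ v₃ v₄ : Vidx,
    ∑ e : Vidx, ∑ f : Vidx, MvPolynomial.C (eta e f) * d3 F v₁ v₂ e * d3 F f v₃ v₄ =
    ∑ e : Vidx, ∑ f : Vidx, MvPolynomial.C (eta e f) * d3 F v₁ v₃ e * d3 F f v₂ v₄

/-- The FJRW potential of the singularity `x₁³+x₂³`. -/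
noncomputable def F33 : MvPolynomial Vidx ℚ :=
  MvPolynomial.C (1/2 : ℚ) * X (0,0) ^ 2 * X (1,1)
  + X (0,0) * X (1,0) * X (0,1)
  + MvPolynomial.C (1/18 : ℚ) * X (1,0) ^ 3 * X (1,1)
  + MvPolynomial.C (1/18 : ℚ) * X (0,1) ^ 3 * X (1,1)
  + MvPolynomial.C (1/54 : ℚ) * X (1,0) * X (0,1) * X (1,1) ^ 3
  + MvPolynomial.C (1/68040 : ℚ) * X (1,1) ^ 7

/-- The values of the third derivatives of `F33`, as a function of the number of derivatives
taken in each of the four variables. -/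
def g3 (x : Vidx → ℚ) (a b c : Vidx) : ℚ :=
  let n : Vidx → ℕ := fun v =>
    (if a = v then 1 else 0) + (if b = v then 1 else 0) + (if c = v then 1 else 0)
  let D : ℕ → Vidx → ℚ := fun e v => (e.descFactorial (n v) : ℚ) * x v ^ (e - n v)
  1/2 * D 2 (0,0) * D 0 (1,0) * D 0 (0,1) * D 1 (1,1)
  + D 1 (0,0) * D 1 (1,0) * D 1 (0,1) * D 0 (1,1)
  + 1/18 * D 0 (0,0) * D 3 (1,0) * D 0 (0,1) * D 1 (1,1)
  + 1/18 * D 0 (0,0) * D 0 (1,0) * D 3 (0,1) * D 1 (1,1)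
  + 1/54 * D 0 (0,0) * D 1 (1,0) * D 1 (0,1) * D 3 (1,1)
  + 1/68040 * D 0 (0,0) * D 0 (1,0) * D 0 (0,1) * D 7 (1,1)

lemma pderiv_num2 (v : Vidx) : pderiv v (2 : MvPolynomial Vidx ℚ) = 0 :=
  (pderiv v).map_natCast 2

lemma pderiv_num3 (v : Vidx) : pderiv v (3 : MvPolynomial Vidx ℚ) = 0 :=
  (pderiv v).map_natCast 3

lemma pderiv_num6 (v : Vidx) : pderiv v (6 : MvPolynomial Vidx ℚ) = 0 :=
  (pderiv v).map_natCast 6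

lemma pderiv_num7 (v : Vidx) : pderiv v (7 : MvPolynomial Vidx ℚ) = 0 :=
  (pderiv v).map_natCast 7

set_option maxHeartbeats 4000000 in
lemma eval_d3 (x : Vidx → ℚ) (a b c : Vidx) : eval x (d3 F33 a b c) = g3 x a b c := by
  revert a b c
  simp only [Prod.forall, Fin.forall_fin_two]
  refine ⟨⟨⟨⟨⟨⟨?_, ?_⟩, ?_, ?_⟩, ⟨?_, ?_⟩, ?_, ?_⟩, ⟨⟨?_, ?_⟩, ?_, ?_⟩, ⟨?_, ?_⟩, ?_, ?_⟩,
    ⟨⟨⟨?_, ?_⟩, ?_, ?_⟩, ⟨?_, ?_⟩, ?_, ?_⟩, ⟨⟨?_, ?_⟩, ?_, ?_⟩, ⟨?_, ?_⟩, ?_, ?_⟩,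
    ⟨⟨⟨⟨?_, ?_⟩, ?_, ?_⟩, ⟨?_, ?_⟩, ?_, ?_⟩, ⟨⟨?_, ?_⟩, ?_, ?_⟩, ⟨?_, ?_⟩, ?_, ?_⟩,
    ⟨⟨⟨?_, ?_⟩, ?_, ?_⟩, ⟨?_, ?_⟩, ?_, ?_⟩, ⟨⟨?_, ?_⟩, ?_, ?_⟩, ⟨?_, ?_⟩, ?_, ?_⟩ <;>
    simp [d3, F33, g3, -mul_eq_mul_left_iff, -mul_eq_mul_right_iff, -mul_eq_zero,
      -add_left_inj, -add_right_inj, pderiv_X, Derivation.leibniz, Derivation.leibniz_pow,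
      Nat.descFactorial, pderiv_num2, pderiv_num3, 
      pderiv_num6, pderiv_num7] <;> ring

lemma ext_eval (p q : MvPolynomial Vidx ℚ) (h : ∀ x : Vidx → ℚ, eval x p = eval x q) : p = q :=
  MvPolynomial.funext h

set_option maxHeartbeats 8000000 in
lemma wdvv_F33 : SatisfiesWDVV F33 := by
  intro v w r s
  apply ext_eval
  intro x
  simp only [Fintype.sum_prod_type, Fin.sum_univ_two, eta]
  simp only [Fin.val_zero, Fin.val_one]
  norm_num
  simp only [eval_d3]
  revert v w r s
  simp only [Prod.forall, Fin.forall_fin_two]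
  simp [g3, Nat.descFactorial, -mul_eq_mul_left_iff, -mul_eq_mul_right_iff, -mul_eq_zero,
      -add_left_inj, -add_right_inj]
  repeat' apply And.intro
  all_goals ring

lemma flat_F33 (a b : Vidx) : d3 F33 (0,0) a b = MvPolynomial.C (eta a b) := by
  apply ext_eval
  intro x
  rw [eval_d3, eval_C]
  obtain ⟨a1, a2⟩ := a
  obtain ⟨b1, b2⟩ := b
  fin_cases a1 <;> fin_cases a2 <;> fin_cases b1 <;> fin_cases b2 <;>
    simp [g3, eta, Nat.descFactorial]

/-- The weights `3, 2, 2, 1` of the four variables. -/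
lemma homog_F33 : IsWeightedHomogeneous
    (fun v : Vidx => if v = (0,0) then 3 else if v = (1,1) then 1 else 2) F33 7 := by
  set w : Vidx → ℕ := fun v : Vidx => if v = (0,0) then 3 else if v = (1,1) then 1 else 2 with hw
  have hC := fun r : ℚ => isWeightedHomogeneous_C w r
  have hX := fun v : Vidx => isWeightedHomogeneous_X ℚ w v
  unfold F33
  refine (((((?_ : IsWeightedHomogeneous w _ 7).add ?_).add ?_).add ?_).add ?_).add ?_
  · exact ((hC _).mul ((hX _).pow 2)).mul (hX _)
  · exact ((hX _).mul (hX _)).mul (hX _)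
  · exact ((hC _).mul ((hX _).pow 3)).mul (hX _)
  · exact ((hC _).mul ((hX _).pow 3)).mul (hX _)
  · exact (((hC _).mul (hX _)).mul (hX _)).mul ((hX _).pow 3)
  · exact (hC _).mul ((hX _).pow 7)

/-- `F_{3,3}` satisfies the WDVV equations, `∂³F_{3,3}/∂t_{00}∂t_a∂t_b = η_{a,b}`,
and every monomial `t₀₀^a t₁₀^b t₀₁^c t₁₁^d` occurring in `F_{3,3}` satisfies
`3a + 2b + 2c + d = 7`. -/
theorem F33_wdvv_flat_homogeneous :
    SatisfiesWDVV F33 ∧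
    (∀ a b : Vidx, d3 F33 (0,0) a b = MvPolynomial.C (eta a b)) ∧
    (∀ m ∈ F33.support,
      3 * m (0,0) + 2 * m (1,0) + 2 * m (0,1) + m (1,1) = 7) := by
  refine ⟨wdvv_F33, flat_F33, ?_⟩
  intro m hm
  have h := homog_F33 (mem_support_iff.mp hm)
  rw [Finsupp.weight_apply, Finsupp.sum_fintype _ _ (by simp)] at h
  simp [Fintype.sum_prod_type, Fin.sum_univ_two] at h
  omega
end

section
/- For all i, j ∈ V, the polynomial Σ_{k ∈ V} φ_k·ĉ_{i,j}^k − φ_i·φ_j lies in the ideal of ℚ[s_{00}, s_{10}, s_{01}, s_{11}, x₁, x₂] generated by ∂W_s/∂x₁ = 3x₁² + s_{11}x₂ + s_{10} and ∂W_s/∂x₂ = 3x₂² + s_{11}x₁ + s_{01}. That is, under the coordinate change t(s), the Frobenius multiplication defined by the FJRW potential F_{3,3} coincides with the multiplication in the Jacobian algebra of the miniversal deformation W_s of x₁³+x₂³ — the multiplication part of the Landau–Ginzburg mirror isomorphism for D₄. -/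
open scoped BigOperators
open MvPolynomial

/-- Structure constants of the Frobenius multiplication of `F_{3,3}` in the flat coordinates:
`c_{a,b}^e(t) = ∑_f η_{e,f}·∂³F_{3,3}/∂t_a∂t_b∂t_f`. -/
noncomputable def cStruct (a b e : Vidx) : MvPolynomial Vidx ℚ :=
  ∑ f : Vidx, MvPolynomial.C (eta e f) * pderiv a (pderiv b (pderiv f F33))

/-- The coordinate change `t(s)`: `t₀₀ = s₀₀ + s₁₁³/54`, `t₁₀ = −s₁₀`, `t₀₁ = −s₀₁`,
`t₁₁ = s₁₁` (here `X v` is `s_v`). -/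
noncomputable def tOfS : Vidx → MvPolynomial Vidx ℚ := fun v =>
  if v = ((0,0) : Vidx) then X (0,0) + MvPolynomial.C (1/54 : ℚ) * X (1,1) ^ 3
  else if v = ((1,0) : Vidx) then -X (1,0)
  else if v = ((0,1) : Vidx) then -X (0,1)
  else X (1,1)

/-- The inverse coordinate change `s(t)`: `s₀₀ = t₀₀ − t₁₁³/54`, `s₁₀ = −t₁₀`, `s₀₁ = −t₀₁`,
`s₁₁ = t₁₁` (here `X v` is `t_v`). -/
noncomputable def sOfT : Vidx → MvPolynomial Vidx ℚ := fun v =>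
  if v = ((0,0) : Vidx) then X (0,0) - MvPolynomial.C (1/54 : ℚ) * X (1,1) ^ 3
  else if v = ((1,0) : Vidx) then -X (1,0)
  else if v = ((0,1) : Vidx) then -X (0,1)
  else X (1,1)

/-- The structure constants in the coordinates `s`:
`ĉ_{i,j}^k(s) = ∑_{a,b,e} (∂t_a/∂s_i)·(∂t_b/∂s_j)·(∂s_k/∂t_e)∘t(s)·c_{a,b}^e∘t(s)`. -/
noncomputable def cHat (i j k : Vidx) : MvPolynomial Vidx ℚ :=
  ∑ a : Vidx, ∑ b : Vidx, ∑ e : Vidx,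
    pderiv i (tOfS a) * pderiv j (tOfS b) *
      MvPolynomial.aeval tOfS (pderiv e (sOfT k)) *
        MvPolynomial.aeval tOfS (cStruct a b e)

/-- The basis `φ_{(0,0)} = 1`, `φ_{(1,0)} = x₁`, `φ_{(0,1)} = x₂`, `φ_{(1,1)} = x₁x₂` of the
Jacobian algebra, inside `ℚ[s₀₀,s₁₀,s₀₁,s₁₁,x₁,x₂]` (with `x₁ = X (Sum.inr 0)` and
`x₂ = X (Sum.inr 1)`). -/
noncomputable def phiB : Vidx → MvPolynomial (Vidx ⊕ Fin 2) ℚ := fun v =>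
  if v = ((0,0) : Vidx) then 1
  else if v = ((1,0) : Vidx) then X (Sum.inr 0)
  else if v = ((0,1) : Vidx) then X (Sum.inr 1)
  else X (Sum.inr 0) * X (Sum.inr 1)

/-- The four coordinate functions of `cHat`, after evaluation of all derivatives. -/
noncomputable def cTable (i j k : Vidx) : MvPolynomial Vidx ℚ :=
  if i = ((0,0) : Vidx) then (if j = k then 1 else 0)
  else if j = ((0,0) : Vidx) then (if i = k then 1 else 0)
  else if i = ((1,0) : Vidx) ∧ j = ((1,0) : Vidx) then
    (if k = ((0,0) : Vidx) then C (-1/3) * X (1,0)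
      else if k = ((0,1) : Vidx) then C (-1/3) * X (1,1) else 0)
  else if i = ((0,1) : Vidx) ∧ j = ((0,1) : Vidx) then
    (if k = ((0,0) : Vidx) then C (-1/3) * X (0,1)
      else if k = ((1,0) : Vidx) then C (-1/3) * X (1,1) else 0)
  else if i = ((1,1) : Vidx) ∧ j = ((1,1) : Vidx) then
    (if k = ((0,0) : Vidx) then C (1/9) * X (1,0) * X (0,1)
      else if k = ((1,0) : Vidx) then C (1/9) * X (1,0) * X (1,1)
      else if k = ((0,1) : Vidx) then C (1/9) * X (0,1) * X (1,1)
      else C (1/9) * X (1,1) ^ 2)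
  else if i = ((1,0) : Vidx) ∧ j = ((1,1) : Vidx) ∨ i = ((1,1) : Vidx) ∧ j = ((1,0) : Vidx) then
    (if k = ((0,0) : Vidx) then C (1/9) * X (0,1) * X (1,1)
      else if k = ((1,0) : Vidx) then C (1/9) * X (1,1) ^ 2
      else if k = ((0,1) : Vidx) then C (-1/3) * X (1,0) else 0)
  else if i = ((0,1) : Vidx) ∧ j = ((1,1) : Vidx) ∨ i = ((1,1) : Vidx) ∧ j = ((0,1) : Vidx) then
    (if k = ((0,0) : Vidx) then C (1/9) * X (1,0) * X (1,1)
      else if k = ((0,1) : Vidx) then C (1/9) * X (1,1) ^ 2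
      else if k = ((1,0) : Vidx) then C (-1/3) * X (0,1) else 0)
  else (if k = ((1,1) : Vidx) then 1 else 0)

lemma pderiv_X_ite (i j : Vidx) :
    pderiv i (X j : MvPolynomial Vidx ℚ) = if j = i then 1 else 0 := by
  by_cases h : j = i
  · subst h; simp
  · simp [h, pderiv_X_of_ne h]

lemma ofNat_eq_C (n : ℕ) [n.AtLeastTwo] :
    (OfNat.ofNat n : MvPolynomial Vidx ℚ) = C (OfNat.ofNat n : ℚ) := rfl

lemma pderiv_ofNat (i : Vidx) (n : ℕ) [n.AtLeastTwo] :
    pderiv i (ofNat(n) : MvPolynomial Vidx ℚ) = 0 := by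
  have h : (ofNat(n) : MvPolynomial Vidx ℚ) = C (OfNat.ofNat n : ℚ) := rfl
  rw [h, pderiv_C]

lemma bind_ofNat (n : ℕ) [n.AtLeastTwo] :
    bind₁ tOfS (ofNat(n) : MvPolynomial Vidx ℚ) = OfNat.ofNat n := by
  have h : (ofNat(n) : MvPolynomial Vidx ℚ) = C (OfNat.ofNat n : ℚ) := rfl
  rw [h, bind₁_C_right]

/-- First derivatives of the potential. -/
lemma dF_00 : pderiv (0,0) F33 = X (0,0) * X (1,1) + X (1,0) * X (0,1) := by
  have h : (C (1/2 : ℚ) : MvPolynomial Vidx ℚ) * 2 = 1 := by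
    rw [ofNat_eq_C, ← C_mul]; norm_num
  simp [F33, pderiv_X_ite, Derivation.leibniz, Derivation.leibniz_pow, -one_div, -map_inv₀]
  linear_combination X (0,0) * X (1,1) * h

lemma dF_10 : pderiv (1,0) F33 = X (0,0) * X (0,1) + C (1/6) * X (1,0) ^ 2 * X (1,1)
    + C (1/54) * X (0,1) * X (1,1) ^ 3 := by
  have h : (C (1/18 : ℚ) : MvPolynomial Vidx ℚ) * 3 = C (1/6) := by
    rw [ofNat_eq_C, ← C_mul]; norm_num
  simp [F33, pderiv_X_ite, Derivation.leibniz, Derivation.leibniz_pow, -one_div, -map_inv₀]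
  linear_combination X (1,0) ^ 2 * X (1,1) * h

lemma dF_01 : pderiv (0,1) F33 = X (0,0) * X (1,0) + C (1/6) * X (0,1) ^ 2 * X (1,1)
    + C (1/54) * X (1,0) * X (1,1) ^ 3 := by
  have h : (C (1/18 : ℚ) : MvPolynomial Vidx ℚ) * 3 = C (1/6) := by
    rw [ofNat_eq_C, ← C_mul]; norm_num
  simp [F33, pderiv_X_ite, Derivation.leibniz, Derivation.leibniz_pow, -one_div, -map_inv₀]
  linear_combination X (0,1) ^ 2 * X (1,1) * h

lemma dF_11 : pderiv (1,1) F33 = C (1/2) * X (0,0) ^ 2 + C (1/18) * X (1,0) ^ 3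
    + C (1/18) * X (0,1) ^ 3 + C (1/18) * X (1,0) * X (0,1) * X (1,1) ^ 2
    + C (1/9720) * X (1,1) ^ 6 := by
  have h : (C (1/54 : ℚ) : MvPolynomial Vidx ℚ) * 3 = C (1/18) := by
    rw [ofNat_eq_C, ← C_mul]; norm_num
  have hseven : (C (1/68040 : ℚ) : MvPolynomial Vidx ℚ) * 7 = C (1/9720) := by
    rw [ofNat_eq_C, ← C_mul]; norm_num
  simp [F33, pderiv_X_ite, Derivation.leibniz, Derivation.leibniz_pow, -one_div, -map_inv₀]
  linear_combination X (1,0) * X (0,1) * X (1,1) ^ 2 * h + X (1,1) ^ 6 * hseven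

lemma cStruct_eq (a b : Vidx) (e₁ e₂ : Fin 2) : cStruct a b (e₁, e₂) =
    pderiv a (pderiv b (pderiv (1 - e₁, 1 - e₂) F33)) := by
  fin_cases e₁ <;> fin_cases e₂ <;>
  simp [cStruct, eta, Fintype.sum_prod_type]

set_option maxHeartbeats 4000000 in
/-- Derivative of the potential, evaluated at `t(s)`. -/
lemma cHat_eq (i j k : Vidx) : cHat i j k = cTable i j k := by
  obtain ⟨i₁, i₂⟩ := i
  obtain ⟨j₁, j₂⟩ := j
  obtain ⟨k₁, k₂⟩ := k
  simp only [cHat, Fintype.sum_prod_type, Fin.sum_univ_two, cStruct_eq]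
  simp only [sub_zero, sub_self, dF_00, dF_01, dF_10, dF_11]
  simp [pderiv_X_ite, pderiv_ofNat, bind_ofNat, Derivation.leibniz, Derivation.leibniz_pow, -one_div, -map_inv₀]
  have hw : ∀ (n : ℕ) [n.AtLeastTwo], (OfNat.ofNat n : MvPolynomial Vidx ℚ) * C (1 / (OfNat.ofNat n : ℚ)) = 1 := by
    intro n hn
    rw [ofNat_eq_C, ← C_mul, mul_one_div_cancel, C_1]
    exact NeZero.ne _
  have h9 := hw 9720
  have e2 := hw 2
  have e6 := hw 6
  have e18 := hw 18
  have e54 := hw 54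
  have e9 := hw 9
  have e3 := hw 3
  fin_cases i₁ <;> fin_cases i₂ <;> fin_cases j₁ <;> fin_cases j₂ <;>
  fin_cases k₁ <;> fin_cases k₂ <;>
  simp [tOfS, sOfT, cTable, pderiv_X_ite, pderiv_ofNat, bind_ofNat, Derivation.leibniz, Derivation.leibniz_pow, -one_div, -map_inv₀,
    neg_div] <;>
  grind

/-- under the coordinate change `t(s)`, the Frobenius multiplication of `F_{3,3}`
coincides with the multiplication in the Jacobian algebra of the miniversal deformation
`W_s = x₁³ + x₂³ + s₁₁x₁x₂ + s₀₁x₂ + s₁₀x₁ + s₀₀`: for all `i, j ∈ V`,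
`∑_k φ_k·ĉ_{i,j}^k − φ_i·φ_j` lies in the ideal generated by
`∂W_s/∂x₁ = 3x₁² + s₁₁x₂ + s₁₀` and `∂W_s/∂x₂ = 3x₂² + s₁₁x₁ + s₀₁`. -/
theorem multiplication_mirror_symmetry_D4 :
    ∀ i j : Vidx,
      (∑ k : Vidx, phiB k * MvPolynomial.rename Sum.inl (cHat i j k)) - phiB i * phiB j ∈
        Ideal.span
          ({MvPolynomial.C (3 : ℚ) * X (Sum.inr 0) ^ 2 +
              X (Sum.inl (1,1)) * X (Sum.inr 1) + X (Sum.inl (1,0)),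
            MvPolynomial.C (3 : ℚ) * X (Sum.inr 1) ^ 2 +
              X (Sum.inl (1,1)) * X (Sum.inr 0) + X (Sum.inl (0,1))} :
            Set (MvPolynomial (Vidx ⊕ Fin 2) ℚ)) := by
  intro i j
  obtain ⟨i₁, i₂⟩ := i
  obtain ⟨j₁, j₂⟩ := j
  simp only [cHat_eq, Fintype.sum_prod_type, Fin.sum_univ_two]
  have hd : (C (-1/3 : ℚ) : MvPolynomial (Vidx ⊕ Fin 2) ℚ) = -3 * C (1/9) := by
    rw [show (-3 : MvPolynomial (Vidx ⊕ Fin 2) ℚ) = C (-3) by rw [C_neg]; rfl, ← C_mul]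
    norm_num
  have h9 : (9 : MvPolynomial (Vidx ⊕ Fin 2) ℚ) * C (1/9) = 1 := by
    rw [show (9 : MvPolynomial (Vidx ⊕ Fin 2) ℚ) = C 9 from rfl, ← C_mul]
    norm_num
  have h3 : (C (3 : ℚ) : MvPolynomial (Vidx ⊕ Fin 2) ℚ) = 3 := rfl
  rw [Ideal.mem_span_pair]
  set b : MvPolynomial (Vidx ⊕ Fin 2) ℚ := X (Sum.inl (1,0)) with hb
  set c : MvPolynomial (Vidx ⊕ Fin 2) ℚ := X (Sum.inl (0,1)) with hc
  set d : MvPolynomial (Vidx ⊕ Fin 2) ℚ := X (Sum.inl (1,1)) with hdd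
  set x : MvPolynomial (Vidx ⊕ Fin 2) ℚ := X (Sum.inr 0) with hx
  set y : MvPolynomial (Vidx ⊕ Fin 2) ℚ := X (Sum.inr 1) with hy
  set w : MvPolynomial (Vidx ⊕ Fin 2) ℚ := C (1/9) with hw
  fin_cases i₁ <;> fin_cases i₂ <;> fin_cases j₁ <;> fin_cases j₂ <;>
  simp only [cTable, phiB, Fin.zero_eta, Fin.mk_one, Prod.mk.injEq, zero_ne_one, one_ne_zero,
    and_self, and_true, and_false, true_and, false_and, if_true, if_false, or_self, or_true,
    true_or, or_false, false_or, map_zero, map_one, map_mul, map_pow, rename_C, rename_X, h3, hd,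
    ← hb, ← hc, ← hdd, ← hx, ← hy, ← hw]
  -- the order is (00), (01), (10), (11) for both indices
  · exact ⟨0, 0, by ring⟩
  · exact ⟨0, 0, by ring⟩
  · exact ⟨0, 0, by ring⟩
  · exact ⟨0, 0, by ring⟩
  · exact ⟨0, 0, by ring⟩
  · exact ⟨0, -3 * w, by linear_combination -y ^ 2 * h9⟩
  · exact ⟨0, 0, by ring⟩
  · exact ⟨d * w, -3 * w * x, by linear_combination -x * y ^ 2 * h9⟩
  · exact ⟨0, 0, by ring⟩
  · exact ⟨0, 0, by ring⟩
  · exact ⟨-3 * w, 0, by linear_combination -x ^ 2 * h9⟩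
  · exact ⟨-3 * w * y, d * w, by linear_combination -x ^ 2 * y * h9⟩
  · exact ⟨0, 0, by ring⟩
  · exact ⟨d * w, -3 * w * x, by linear_combination -x * y ^ 2 * h9⟩
  · exact ⟨-3 * w * y, d * w, by linear_combination -x ^ 2 * y * h9⟩
  · exact ⟨-3 * w * y ^ 2, w * (d * y + b), by linear_combination -x ^ 2 * y ^ 2 * h9⟩
end
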